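/- arXiv:1402.0424 — 3 statements merged into one kernel-verified Lean document; each statement's English description precedes it below -/
import Mathlib

section
/- Let ω be a C^k volume form on C (k ≥ 0) and let f be a circle homeomorphism such that the diagonal map (x,y) ↦ (f(x),f(y)) preserves the measure on C with density ω. Then f is a C^{k+1} diffeomorphism of S¹, and it satisfies ω(f(x),f(y))·f'(x)·f'(y) = ω(x,y) for all (x,y) ∈ C. -/
/-!
In the angular coordinate, `f` has a continuous lift `F : ℝ → ℝ` that is strictly monotone or
strictly antitone and of degree `±1` (`exists_homeo_lift`). Write `w` for the density `ω` in
angular coordinates. Invariance of the measure, tested on products of two short arcs with disjoint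
closures, gives the identity of oriented areas
`∫_a^b ∫_c^d w = ∫_{F a}^{F b} ∫_{F c}^{F d} w` (`exists_area_identity`).

As a function of `b` the left side is `C¹`, and the right side is `G (F b)` with `G` of class `C¹`
and `G' ≠ 0`, because `w` is continuous and positive. Inverting `G` locally shows that `F` is
differentiable (`hasDerivAt_of_area`), with `∫_c^d w (b, y) dy = F' b ∫_{F c}^{F d} w (F b, v) dv`.
Differentiating this in `d` gives `w (b, d) = w (F b, F d) F' b F' d` (`density_eq_of_area`); in
particular `F'` vanishes nowhere. Solving for `F' b` with `d` fixed expresses `F'` through `w` and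
`F`, so that `F` of class `C^n` with `n ≤ k` implies `F` of class `C^(n+1)`
(`contDiff_of_density`).
-/

noncomputable section

open Real Set Function MeasureTheory
open scoped Classical

/-- The circle, modeled as the real projective line `ℝP¹`. -/
abbrev RP1 : Type := Projectivization ℝ (Fin 2 → ℝ)

instance : TopologicalSpace RP1 :=
  inferInstanceAs (TopologicalSpace (Quotient (projectivizationSetoid ℝ (Fin 2 → ℝ))))

instance : MeasurableSpace RP1 := borel RP1
instance : BorelSpace RP1 := ⟨rfl⟩

lemma cossin_ne_zero (t : ℝ) : ![Real.cos (π * t), Real.sin (π * t)] ≠ 0 := by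
  intro h
  have h0 : Real.cos (π * t) = 0 := by simpa using congrFun h 0
  have h1 : Real.sin (π * t) = 0 := by simpa using congrFun h 1
  have h2 := Real.sin_sq_add_cos_sq (π * t)
  rw [h0, h1] at h2
  norm_num at h2

/-- The standard (angular) parametrization `ℝ → ℝP¹`; it has period `1` and realizes
the identification `S¹ = ℝ/ℤ ≃ ℝP¹`. -/
def para (t : ℝ) : RP1 :=
  Projectivization.mk ℝ ![Real.cos (π * t), Real.sin (π * t)] (cossin_ne_zero t)

/-- `F : ℝ → ℝ` is a lift of the circle map `f` through the angular parametrization. -/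
def IsLift (F : ℝ → ℝ) (f : RP1 → RP1) : Prop :=
  ∀ t : ℝ, f (para t) = para (F t)

/-- `f` is a `C^k` diffeomorphism of the circle: it admits a `C^k` lift of degree `±1`
with nowhere vanishing derivative. -/
def IsCircleDiffeo (k : ℕ∞) (f : RP1 → RP1) : Prop :=
  ∃ F : ℝ → ℝ, IsLift F f ∧ ContDiff ℝ k F ∧ (∀ t : ℝ, deriv F t ≠ 0) ∧
    ((∀ t : ℝ, F (t + 1) = F t + 1) ∨ (∀ t : ℝ, F (t + 1) = F t - 1))

/-- `f` is a real-analytic diffeomorphism of the circle. -/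
def IsAnalyticCircleDiffeo (f : RP1 → RP1) : Prop :=
  ∃ F : ℝ → ℝ, IsLift F f ∧ AnalyticOnNhd ℝ F Set.univ ∧ (∀ t : ℝ, deriv F t ≠ 0) ∧
    ((∀ t : ℝ, F (t + 1) = F t + 1) ∨ (∀ t : ℝ, F (t + 1) = F t - 1))

/-- The derivative of a circle map at a point, computed in the angular coordinate via a
differentiable lift. (Any two differentiable lifts differ by an integer constant, and the
derivative of a lift is `1`-periodic, so this does not depend on any choice.) -/
def circleDeriv (f : RP1 → RP1) (x : RP1) : ℝ :=
  if h : ∃ F : ℝ → ℝ, IsLift F f ∧ Differentiable ℝ F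
  then deriv h.choose (Function.invFun para x) else 0

/-- The `n`-th derivative of a smooth circle map at a point, in the angular coordinate. -/
def circleDerivN (n : ℕ) (f : RP1 → RP1) (x : RP1) : ℝ :=
  if h : ∃ F : ℝ → ℝ, IsLift F f ∧ ContDiff ℝ (⊤ : ℕ∞) F
  then iteratedDeriv n h.choose (Function.invFun para x) else 0

/-- The expression of a function on `S¹ × S¹` in the angular coordinates. -/
def chartDensity (ω : RP1 → RP1 → ℝ) : ℝ × ℝ → ℝ := fun q => ω (para q.1) (para q.2)

/-- The lift to `ℝ × ℝ` of the complement of the diagonal in `S¹ × S¹`. -/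
def offDiag2 : Set (ℝ × ℝ) := {q : ℝ × ℝ | para q.1 ≠ para q.2}

/-- A `C^k` volume form on the cylinder `C = S¹ × S¹ \ Δ`: a positive function of class
`C^k` (in the angular coordinates) off the diagonal. -/
def IsVolumeForm (k : ℕ∞) (ω : RP1 → RP1 → ℝ) : Prop :=
  (∀ x y : RP1, x ≠ y → 0 < ω x y) ∧ ContDiffOn ℝ k (chartDensity ω) offDiag2

/-- A real-analytic volume form on the cylinder `C = S¹ × S¹ \ Δ`. -/
def IsAnalyticVolumeForm (ω : RP1 → RP1 → ℝ) : Prop :=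
  (∀ x y : RP1, x ≠ y → 0 < ω x y) ∧ AnalyticOnNhd ℝ (chartDensity ω) offDiag2

/-- The circle diffeomorphism `f` preserves the volume form `ω` on the cylinder:
`ω (f x) (f y) · f'(x) · f'(y) = ω x y` for all `x ≠ y`. -/
def PreservesForm (f : RP1 → RP1) (ω : RP1 → RP1 → ℝ) : Prop :=
  ∀ x y : RP1, x ≠ y →
    ω (f x) (f y) * circleDeriv f x * circleDeriv f y = ω x y

abbrev SL2 : Type := Matrix.SpecialLinearGroup (Fin 2) ℝ

/-- The projective action of `SL(2,ℝ)` on `ℝP¹`; its image in the maps of `ℝP¹`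
is the group `PSL(2,ℝ)`. -/
def mobius (M : SL2) : RP1 → RP1 :=
  Projectivization.map (Matrix.SpecialLinearGroup.toLin' M : (Fin 2 → ℝ) →ₗ[ℝ] Fin 2 → ℝ)
    (Matrix.SpecialLinearGroup.toLin' M).injective

/-- `f` is an element of `PSL(2,ℝ)`, viewed as a self-map of the circle `ℝP¹`. -/
def IsMobius (f : RP1 → RP1) : Prop := ∃ M : SL2, f = mobius M

lemma rot_det (α : ℝ) :
    Matrix.det !![Real.cos (π * α), -Real.sin (π * α); Real.sin (π * α), Real.cos (π * α)] = 1 := by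
  rw [Matrix.det_fin_two_of]
  nlinarith [Real.sin_sq_add_cos_sq (π * α)]

/-- The rotation of angle `α` (in the angular coordinate of total length `1`), as an
element of `SL(2,ℝ)`: `mobius (rotSL α)` is the rotation `para t ↦ para (t + α)`. -/
def rotSL (α : ℝ) : SL2 :=
  ⟨!![Real.cos (π * α), -Real.sin (π * α); Real.sin (π * α), Real.cos (π * α)], rot_det α⟩

section Reps

variable {Γ : Type*} [Group Γ]

/-- The action `ρ` has no finite orbit on the circle. -/
def HasNoFiniteOrbit (ρ : Γ →* Equiv.Perm RP1) : Prop :=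
  ∀ x : RP1, (Set.range fun γ : Γ => ρ γ x).Infinite

/-- The action `ρ` has a dense orbit on the circle. -/
def HasDenseOrbit (ρ : Γ →* Equiv.Perm RP1) : Prop :=
  ∃ x : RP1, Dense (Set.range fun γ : Γ => ρ γ x)

/-- `L` is the limit set of the action `ρ`: the minimal nonempty closed invariant subset. -/
def IsLimitSet (ρ : Γ →* Equiv.Perm RP1) (L : Set RP1) : Prop :=
  L.Nonempty ∧ IsClosed L ∧ (∀ γ : Γ, (ρ γ) '' L = L) ∧
    ∀ L' : Set RP1, L'.Nonempty → IsClosed L' → (∀ γ : Γ, (ρ γ) '' L' = L') → L ⊆ L'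

/-- `ρ` is area-preserving: the diagonal action on the cylinder preserves a smooth
volume form. -/
def AreaPreserving (ρ : Γ →* Equiv.Perm RP1) : Prop :=
  ∃ ω : RP1 → RP1 → ℝ, IsVolumeForm (⊤ : ℕ∞) ω ∧ ∀ γ : Γ, PreservesForm (ρ γ) ω

/-- `ρ` is topologically Fuchsian: conjugate to a subgroup of `PSL(2,ℝ)` by a
homeomorphism of the circle. -/
def TopologicallyFuchsian (ρ : Γ →* Equiv.Perm RP1) : Prop :=
  ∃ h : RP1 ≃ₜ RP1, ∀ γ : Γ, IsMobius fun x => h.symm (ρ γ (h x))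

/-- `ρ` is differentially Fuchsian: conjugate to a subgroup of `PSL(2,ℝ)` by a `C^∞`
diffeomorphism of the circle. -/
def DifferentiallyFuchsian (ρ : Γ →* Equiv.Perm RP1) : Prop :=
  ∃ h g : RP1 → RP1, IsCircleDiffeo (⊤ : ℕ∞) h ∧ IsCircleDiffeo (⊤ : ℕ∞) g ∧
    (∀ x, g (h x) = x) ∧ (∀ x, h (g x) = x) ∧
    ∀ γ : Γ, IsMobius fun x => g (ρ γ (h x))

/-- `ρ` is analytically Fuchsian: conjugate to a subgroup of `PSL(2,ℝ)` by a real-analytic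
diffeomorphism of the circle. -/
def AnalyticallyFuchsian (ρ : Γ →* Equiv.Perm RP1) : Prop :=
  ∃ h g : RP1 → RP1, IsAnalyticCircleDiffeo h ∧ IsAnalyticCircleDiffeo g ∧
    (∀ x, g (h x) = x) ∧ (∀ x, h (g x) = x) ∧
    ∀ γ : Γ, IsMobius fun x => g (ρ γ (h x))

end Reps

/-- The "Lebesgue" measure on the circle, transported from `[0,1)` by the angular
parametrization. -/
def circleMeasure : Measure RP1 :=
  Measure.map para (volume.restrict (Set.Ico (0 : ℝ) 1))

/-- The measure on `S¹ × S¹` with density `ω` with respect to Lebesgue measure. -/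
def volumeFormMeasure (ω : RP1 → RP1 → ℝ) : Measure (RP1 × RP1) :=
  (circleMeasure.prod circleMeasure).withDensity fun q => ENNReal.ofReal (ω q.1 q.2)

-- extras appended to base
section Extra

open scoped UpperHalfPlane

/-- The affine chart `ℝ → ℝP¹`, `u ↦ [u : 1]`, realizing `S¹ = ℝ ∪ {∞}`. -/
def aff (u : ℝ) : RP1 :=
  Projectivization.mk ℝ ![u, (1 : ℝ)] (by
    intro h
    simpa using congrFun h 1)

/-- The curvature `K = (2/ω) ∂²(log ω)/∂x∂y` (in the angular coordinates) of the Lorentz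
metric associated to the volume form `ω` on the cylinder. -/
def curvature (ω : RP1 → RP1 → ℝ) (x y : RP1) : ℝ :=
  (2 / ω x y) *
    deriv (fun t : ℝ =>
        deriv (fun s : ℝ => Real.log (ω (para t) (para s))) (Function.invFun para y))
      (Function.invFun para x)

/-- The Schwarzian derivative of `f` (with respect to the standard projective structure of
`ℝP¹`) vanishes at `x`: `f` agrees to third order at `x` with some element of `PSL(2,ℝ)`. -/
def SchwarzianVanishesAt (f : RP1 → RP1) (x : RP1) : Prop :=
  ∃ M : SL2, f x = mobius M x ∧
    circleDerivN 1 f x = circleDerivN 1 (mobius M) x ∧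
    circleDerivN 2 f x = circleDerivN 2 (mobius M) x ∧
    circleDerivN 3 f x = circleDerivN 3 (mobius M) x

/-- The action on the hyperbolic plane of an element of `PSL(2,ℝ)`, given as a self-map of
the circle. (Well defined: matrices `±M` induce the same map on `ℝP¹` and on `ℍ`.) -/
def mobiusHAct (f : RP1 → RP1) : ℍ → ℍ :=
  if h : ∃ M : SL2, f = mobius M then fun z => h.choose • z else id

/-- A subset of the hyperbolic plane is (geodesically) convex iff it contains every point
lying between two of its points. -/
def HypConvex (C : Set ℍ) : Prop :=
  ∀ x ∈ C, ∀ y ∈ C, ∀ z : ℍ, dist x z + dist z y = dist x y → z ∈ C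

/-- A Cantor subset of the circle: nonempty, perfect, with empty interior. -/
def IsCantorSet (L : Set RP1) : Prop :=
  L.Nonempty ∧ Perfect L ∧ interior L = ∅

/-- `ρ` is a convex cocompact representation in `PSL(2,ℝ)`: it is injective, takes values in
`PSL(2,ℝ)`, is discrete (acts properly discontinuously on `ℍ`), its limit set is a Cantor
set, and it acts cocompactly on some nonempty closed convex invariant subset of `ℍ`
(equivalently, on the convex hull of its limit set). -/
def IsConvexCocompact {Γ : Type*} [Group Γ] (ρ : Γ →* Equiv.Perm RP1) : Prop :=
  Function.Injective ρ ∧ (∀ γ : Γ, IsMobius (ρ γ)) ∧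
  (∀ K : Set ℍ, IsCompact K →
    {γ : Γ | ((mobiusHAct (ρ γ) '' K) ∩ K).Nonempty}.Finite) ∧
  (∃ L : Set RP1, IsLimitSet ρ L) ∧
  (∀ L : Set RP1, IsLimitSet ρ L → IsCantorSet L) ∧
  ∃ C : Set ℍ, C.Nonempty ∧ IsClosed C ∧ HypConvex C ∧
    (∀ γ : Γ, mobiusHAct (ρ γ) '' C = C) ∧
    ∃ K : Set ℍ, IsCompact K ∧ C ⊆ ⋃ γ : Γ, mobiusHAct (ρ γ) '' K

/-- Two circle maps are `ε`-close in the `C¹` topology. -/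
def C1Close (f g : RP1 → RP1) (ε : ℝ) : Prop :=
  ∃ F G : ℝ → ℝ, IsLift F f ∧ IsLift G g ∧ ContDiff ℝ 1 F ∧ ContDiff ℝ 1 G ∧
    ∀ t : ℝ, |F t - G t| ≤ ε ∧ |deriv F t - deriv G t| ≤ ε

/-- `ρ` is spectrally Möbius-like: every nontrivial element has at most two fixed points,
and at a pair of fixed points `N, S` the derivatives satisfy `f'(N)·f'(S) = 1`, `f'(N) ≠ 1`. -/
def SpectrallyMobiusLike {Γ : Type*} [Group Γ] (ρ : Γ →* Equiv.Perm RP1) : Prop :=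
  ∀ γ : Γ, ρ γ ≠ 1 →
    {x : RP1 | ρ γ x = x}.encard ≤ 2 ∧
    ∀ N S : RP1, N ≠ S → {x : RP1 | ρ γ x = x} = {N, S} →
      circleDeriv (ρ γ) N * circleDeriv (ρ γ) S = 1 ∧ circleDeriv (ρ γ) N ≠ 1

end Extra

/-! ### The circle as `ℝ/ℤ` -/

/-- The squaring map `[a : b] ↦ (a + ib)² / (a² + b²)`, an injective map from `ℝP¹` to `ℂ`;
it pulls the Hausdorff property back to `ℝP¹`. -/
def sqMap : RP1 → ℂ :=
  Projectivization.lift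
    (fun v : {v : Fin 2 → ℝ // v ≠ 0} =>
      ((v.1 0 : ℂ) + v.1 1 * Complex.I) ^ 2 / ((v.1 0 : ℂ) ^ 2 + (v.1 1 : ℂ) ^ 2))
    (by
      rintro ⟨a, ha⟩ ⟨b, hb⟩ t h
      have ht : t ≠ 0 := by
        rintro rfl
        simp at h
        exact ha h
      have htc : (t : ℂ) ≠ 0 := by exact_mod_cast ht
      simp only at h
      subst h
      simp only [Pi.smul_apply, smul_eq_mul, Complex.ofReal_mul]
      rw [show ((t : ℂ) * (b 0 : ℂ) + t * (b 1 : ℂ) * Complex.I) ^ 2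
        = (t : ℂ) ^ 2 * ((b 0 : ℂ) + (b 1 : ℂ) * Complex.I) ^ 2 by ring,
        show ((t : ℂ) * (b 0 : ℂ)) ^ 2 + (t * (b 1 : ℂ)) ^ 2
        = (t : ℂ) ^ 2 * ((b 0 : ℂ) ^ 2 + (b 1 : ℂ) ^ 2) by ring]
      exact mul_div_mul_left _ _ (pow_ne_zero 2 htc))

lemma continuous_sqMap : Continuous sqMap := by
  refine Continuous.quotient_lift (s := projectivizationSetoid ℝ (Fin 2 → ℝ)) ?_ _
  have h0 : ∀ i, Continuous fun v : {v : Fin 2 → ℝ // v ≠ 0} => ((v.1 i : ℝ) : ℂ) := fun i =>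
    Complex.continuous_ofReal.comp ((continuous_apply i).comp continuous_subtype_val)
  refine Continuous.div (((h0 0).add ((h0 1).mul continuous_const)).pow 2)
    (((h0 0).pow 2).add ((h0 1).pow 2)) ?_
  rintro ⟨v, hv⟩ h
  apply hv
  have h' : (v 0) ^ 2 + (v 1) ^ 2 = 0 := by exact_mod_cast h
  ext i
  fin_cases i
  · simp; nlinarith [sq_nonneg (v 0), sq_nonneg (v 1)]
  · simp; nlinarith [sq_nonneg (v 0), sq_nonneg (v 1)]

lemma sqMap_para (t : ℝ) : sqMap (para t) = AddCircle.toCircle (T := 1) (t : AddCircle (1 : ℝ)) := by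
  rw [AddCircle.toCircle_apply_mk, Circle.coe_exp]
  simp only [sqMap, para, Projectivization.lift_mk]
  have h1 : ((Real.cos (π * t) : ℝ) : ℂ) ^ 2 + ((Real.sin (π * t) : ℝ) : ℂ) ^ 2 = 1 := by
    exact_mod_cast Real.cos_sq_add_sin_sq (π * t)
  simp only [Matrix.cons_val_zero, Matrix.cons_val_one]
  rw [h1, div_one, Complex.ofReal_cos, Complex.ofReal_sin, ← Complex.exp_mul_I, ← Complex.exp_nat_mul]
  congr 1
  push_cast
  ring

lemma para_eq_iff {s t : ℝ} : para s = para t ↔ (s : AddCircle (1 : ℝ)) = t := by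
  constructor
  · intro h
    have := congrArg sqMap h
    rw [sqMap_para, sqMap_para] at this
    exact AddCircle.injective_toCircle one_ne_zero (Subtype.ext this)
  · intro h
    rw [← sub_eq_zero, ← AddCircle.coe_sub, AddCircle.coe_eq_zero_iff] at h
    obtain ⟨n, hn⟩ := h
    have hs : s = t + n := by simp at hn; linarith
    subst hs
    unfold para
    rw [Projectivization.mk_eq_mk_iff']
    refine ⟨(-1) ^ n, ?_⟩
    have e : π * (t + n) = π * t + n * π := by ring
    ext i
    fin_cases i
    · simp [e, Real.cos_add_int_mul_pi]
    · simp [e, Real.sin_add_int_mul_pi]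

lemma para_eq_iff_int {s t : ℝ} : para s = para t ↔ ∃ n : ℤ, s = t + n := by
  rw [para_eq_iff, ← sub_eq_zero, ← AddCircle.coe_sub, AddCircle.coe_eq_zero_iff]
  simp only [zsmul_eq_mul, mul_one]
  exact exists_congr fun n => ⟨fun h => by linarith, fun h => by linarith⟩

lemma para_surjective : Surjective para := by
  intro x
  induction x using Projectivization.ind with
  | h v hv =>
    set z : ℂ := ⟨v 0, v 1⟩ with hz
    refine ⟨Complex.arg z / π, ?_⟩
    unfold para
    rw [Projectivization.mk_eq_mk_iff']
    have hz0 : z ≠ 0 := by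
      intro h
      apply hv
      have h0 := congrArg Complex.re h
      have h1 := congrArg Complex.im h
      ext i
      fin_cases i
      · simpa [hz] using h0
      · simpa [hz] using h1
    have hn : ‖z‖ ≠ 0 := norm_ne_zero_iff.2 hz0
    refine ⟨‖z‖⁻¹, ?_⟩
    ext i
    fin_cases i
    · simp [Complex.cos_arg hz0, div_eq_inv_mul]; left; rfl
    · simp [Complex.sin_arg, div_eq_inv_mul]; left; rfl

lemma continuous_para : Continuous para := by
  have : para = (Quotient.mk (projectivizationSetoid ℝ (Fin 2 → ℝ))) ∘
      (fun t : ℝ => ⟨![Real.cos (π * t), Real.sin (π * t)], cossin_ne_zero t⟩) := rfl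
  rw [this]
  refine continuous_quot_mk.comp (Continuous.subtype_mk ?_ _)
  refine continuous_pi fun i => ?_
  fin_cases i
  · simp; fun_prop
  · simp; fun_prop

lemma sqMap_injective : Injective sqMap := by
  intro x y h
  obtain ⟨s, rfl⟩ := para_surjective x
  obtain ⟨t, rfl⟩ := para_surjective y
  rw [sqMap_para, sqMap_para] at h
  exact para_eq_iff.2 (AddCircle.injective_toCircle one_ne_zero (Subtype.ext h))

instance : T2Space RP1 := T2Space.of_injective_continuous sqMap_injective continuous_sqMap

/-- The homeomorphism `ℝ/ℤ ≃ ℝP¹` induced by the angular parametrization. -/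
def circleHomeo : AddCircle (1 : ℝ) ≃ₜ RP1 :=
  have hp : Function.Periodic para (1 : ℝ) := fun t => para_eq_iff_int.2 ⟨1, by simp⟩
  Continuous.homeoOfEquivCompactToT2
    (f := Equiv.ofBijective hp.lift
      ⟨by
        intro a b
        induction a using QuotientAddGroup.induction_on
        induction b using QuotientAddGroup.induction_on
        exact fun h => para_eq_iff.1 h,
      fun x => by
        obtain ⟨t, rfl⟩ := para_surjective x
        exact ⟨(t : AddCircle (1 : ℝ)), rfl⟩⟩)
    (continuous_quot_lift _ continuous_para)

lemma circleHomeo_coe (t : ℝ) : circleHomeo (t : AddCircle (1 : ℝ)) = para t := rfl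

lemma circleHomeo_symm_para (t : ℝ) : circleHomeo.symm (para t) = (t : AddCircle (1 : ℝ)) := by
  rw [← circleHomeo_coe, Homeomorph.symm_apply_apply]

lemma isOpenMap_para : IsOpenMap para :=
  circleHomeo.isOpenMap.comp QuotientAddGroup.isOpenMap_coe

instance : SecondCountableTopology RP1 :=
  isOpenMap_para.isQuotientMap continuous_para para_surjective |>.secondCountableTopology
    isOpenMap_para

lemma isOpen_offDiag2 : IsOpen offDiag2 :=
  isOpen_ne_fun (continuous_para.comp continuous_fst) (continuous_para.comp continuous_snd)

/-! ### Lifts of circle homeomorphisms -/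

/-- Two continuous lifts of the same map differ by an integer constant. -/
lemma lift_sub_const {F G : ℝ → ℝ} (hF : Continuous F) (hG : Continuous G)
    (h : ∀ t, para (G t) = para (F t)) : ∃ n : ℤ, ∀ t, G t = F t + n := by
  choose n hn using fun t => para_eq_iff_int.1 (h t)
  have hc : Continuous fun t => ((n t : ℤ) : ℝ) := by
    have : (fun t => ((n t : ℤ) : ℝ)) = fun t => G t - F t := by
      ext t; rw [hn t]; ring
    rw [this]; exact hG.sub hF
  have hc' : Continuous n := Int.isClosedEmbedding_coe_real.isInducing.continuous_iff.2 hc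
  refine ⟨n 0, fun t => ?_⟩
  rw [hn t, PreconnectedSpace.constant inferInstance hc' (x := t) (y := 0)]

lemma exists_continuous_lift {f : RP1 → RP1} (hf : Continuous f) :
    ∃ F : ℝ → ℝ, Continuous F ∧ IsLift F f := by
  let g : C(ℝ, AddCircle (1 : ℝ)) := ⟨fun t => circleHomeo.symm (f (para t)),
    circleHomeo.symm.continuous.comp (hf.comp continuous_para)⟩
  obtain ⟨e, he⟩ := QuotientAddGroup.mk_surjective (g 0)
  obtain ⟨F, ⟨-, hF⟩, -⟩ := (AddCircle.isCoveringMap_coe (1 : ℝ)).existsUnique_continuousMap_lifts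
    g 0 e he
  refine ⟨F, F.continuous, fun t => ?_⟩
  have := congrFun hF t
  simp only [comp_apply] at this
  rw [← circleHomeo_coe (F t), this]
  simp [g]

/-- A homeomorphism of the circle has a continuous injective lift of degree `±1`: a lift of the
inverse homeomorphism inverts it up to an integer constant. -/
lemma exists_homeo_lift (f : RP1 ≃ₜ RP1) :
    ∃ F : ℝ → ℝ, Continuous F ∧ Injective F ∧ IsLift F f ∧
      ((∀ t : ℝ, F (t + 1) = F t + 1) ∨ (∀ t : ℝ, F (t + 1) = F t - 1)) := by
  obtain ⟨F, hFc, hF⟩ := exists_continuous_lift f.continuous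
  obtain ⟨G, hGc, hG⟩ := exists_continuous_lift f.symm.continuous
  have shift : ∀ {g : RP1 → RP1} {H : ℝ → ℝ}, Continuous H → IsLift H g →
      ∃ m : ℤ, ∀ t, H (t + 1) = H t + m := by
    intro g H hc hl
    refine lift_sub_const hc (hc.comp (continuous_add_const 1)) fun t => ?_
    rw [← hl, ← hl, show para (t + 1) = para t from para_eq_iff_int.2 ⟨1, by simp⟩]
  obtain ⟨m, hm⟩ := shift hFc hF
  obtain ⟨m', hm'⟩ := shift hGc hG
  obtain ⟨n, hn⟩ := lift_sub_const continuous_id (hGc.comp hFc) (fun t => by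
    simp only [comp_apply, id]
    rw [← hG, ← hF, Homeomorph.symm_apply_apply])
  simp only [comp_apply, id] at hn
  have hinj : Injective F := fun s t h => by
    have := hn s
    rw [h, hn t] at this
    linarith
  have hGz : ∀ (j : ℤ) (t : ℝ), G (t + j) = G t + j * m' := by
    intro j
    induction j using Int.induction_on with
    | zero => simp
    | succ i ih =>
      intro t
      have := hm' (t + i)
      push_cast at *
      rw [← add_assoc, this, ih]; ring
    | pred i ih =>
      intro t
      have := hm' (t + (-(i : ℝ) - 1))
      have h2 := ih t
      push_cast at *
      rw [show t + (-(i : ℝ) - 1) + 1 = t + -(i : ℝ) by ring, h2] at this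
      linarith
  have hmm : m * m' = 1 := by
    have h1 := hn (0 + 1)
    rw [hm, hGz, hn] at h1
    have : (m : ℝ) * m' = 1 := by linarith
    exact_mod_cast this
  refine ⟨F, hFc, hinj, hF, ?_⟩
  rcases Int.isUnit_iff.1 (IsUnit.of_mul_eq_one _ hmm) with h | h
  · left; intro t; rw [hm, h]; simp
  · right; intro t; rw [hm, h]; simp; ring

/-! ### The one-variable argument -/

/-- If `G ∘ F` is differentiable at `x`, `F` is continuous at `x` and `G` is strictly
differentiable at `F x` with nonzero derivative, then `F` is differentiable at `x`. -/
lemma hasDerivAt_of_comp {F G : ℝ → ℝ} {x A B : ℝ} (hF : ContinuousAt F x)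
    (hG : HasStrictDerivAt G B (F x)) (hB : B ≠ 0) (hGF : HasDerivAt (fun t => G (F t)) A x) :
    HasDerivAt F (A / B) x := by
  have h1 := hG.to_localInverse hB
  have h2 := h1.hasDerivAt.comp x hGF
  have h3 : ∀ᶠ u in nhds (F x), hG.localInverse G B (F x) hB (G u) = u :=
    hG.hasStrictFDerivAt_equiv hB |>.eventually_left_inverse
  have h4 : F =ᶠ[nhds x] (hG.localInverse G B (F x) hB) ∘ fun t => G (F t) := by
    filter_upwards [hF.eventually h3] with t ht
    exact ht.symm
  have h5 := h2.congr_of_eventuallyEq h4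
  rwa [div_eq_inv_mul]

lemma integral_ne_zero_of_pos {g : ℝ → ℝ} (hg : Continuous g) (hpos : ∀ x, 0 < g x) {a b : ℝ}
    (hab : a ≠ b) : ∫ x in a..b, g x ≠ 0 := by
  rcases lt_or_gt_of_ne hab with h | h
  · exact (intervalIntegral.intervalIntegral_pos_of_pos (hg.intervalIntegrable _ _) hpos h).ne'
  · rw [intervalIntegral.integral_symm]
    exact neg_ne_zero.2 (ne_of_gt
      (intervalIntegral.intervalIntegral_pos_of_pos (hg.intervalIntegrable _ _) hpos h))

/-- The equality of the areas of the rectangles `[a,b] × [c,d]` and `F [a,b] × F [c,d]`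
can be differentiated in `b`, since the second area is a `C¹` function of `F b` with
nonvanishing derivative. -/
lemma hasDerivAt_of_area {W V : ℝ × ℝ → ℝ} (hW : Continuous W) (hV : Continuous V)
    (hVpos : ∀ q, 0 < V q) {F : ℝ → ℝ} (hF : Continuous F) (hFi : Injective F)
    {a b c d x y : ℝ} (hx : x ∈ Ioo a b) (hy : y ∈ Ioo c d)
    (harea : ∀ s ∈ Icc a b, ∀ t ∈ Icc c d,
      ∫ u in a..s, ∫ v in c..t, W (u, v) = ∫ u in F a..F s, ∫ v in F c..F t, V (u, v)) :
    HasDerivAt F ((∫ v in c..y, W (x, v)) / ∫ v in F c..F y, V (F x, v)) x := by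
  have hA : Continuous fun u => ∫ v in c..y, W (u, v) :=
    intervalIntegral.continuous_parametric_intervalIntegral_of_continuous'
      (f := fun u v => W (u, v)) hW _ _
  have hB : Continuous fun u => ∫ v in F c..F y, V (u, v) :=
    intervalIntegral.continuous_parametric_intervalIntegral_of_continuous'
      (f := fun u v => V (u, v)) hV _ _
  refine hasDerivAt_of_comp hF.continuousAt
    (G := fun z => ∫ u in F a..z, ∫ v in F c..F y, V (u, v))
    (hB.integral_hasStrictDerivAt _ _)
    (integral_ne_zero_of_pos (by fun_prop) (fun v => hVpos _) (hFi.ne hy.1.ne)) ?_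
  refine (hA.integral_hasStrictDerivAt a x).hasDerivAt.congr_of_eventuallyEq ?_
  filter_upwards [Ioo_mem_nhds hx.1 hx.2] with s hs
  exact (harea s (Ioo_subset_Icc_self hs) y (Ioo_subset_Icc_self hy)).symm

lemma density_eq_of_area {W V : ℝ × ℝ → ℝ} (hW : Continuous W) (hV : Continuous V)
    (hVpos : ∀ q, 0 < V q) {F : ℝ → ℝ} (hF : Continuous F) (hFi : Injective F)
    {a b c d x y : ℝ} (hx : x ∈ Ioo a b) (hy : y ∈ Ioo c d)
    (harea : ∀ s ∈ Icc a b, ∀ t ∈ Icc c d,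
      ∫ u in a..s, ∫ v in c..t, W (u, v) = ∫ u in F a..F s, ∫ v in F c..F t, V (u, v))
    (hFy : DifferentiableAt ℝ F y) :
    W (x, y) = V (F x, F y) * deriv F x * deriv F y := by
  have key : ∀ᶠ t in nhds y, ∫ v in c..t, W (x, v) = deriv F x * ∫ v in F c..F t, V (F x, v) := by
    filter_upwards [Ioo_mem_nhds hy.1 hy.2] with t ht
    rw [(hasDerivAt_of_area hW hV hVpos hF hFi hx ht harea).deriv, div_mul_cancel₀]
    exact integral_ne_zero_of_pos (by fun_prop) (fun v => hVpos _) (hFi.ne ht.1.ne)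
  have hWx : Continuous fun v => W (x, v) := by fun_prop
  have hVx : Continuous fun v => V (F x, v) := by fun_prop
  have h1 := (hWx.integral_hasStrictDerivAt c y).hasDerivAt
  have h2 := (((hVx.integral_hasStrictDerivAt (F c) (F y)).hasDerivAt.comp y
    hFy.hasDerivAt).const_mul (deriv F x)).congr_of_eventuallyEq key
  rw [h1.unique h2]
  ring

/-- A continuous positive function on a closed rectangle extends to a continuous positive
function on the plane, by clamping the coordinates. -/
lemma exists_clamp {w : ℝ × ℝ → ℝ} {a b c d : ℝ} (hab : a ≤ b) (hcd : c ≤ d)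
    (hw : ContinuousOn w (Icc a b ×ˢ Icc c d)) (hpos : ∀ q ∈ Icc a b ×ˢ Icc c d, 0 < w q) :
    ∃ W : ℝ × ℝ → ℝ, Continuous W ∧ (∀ q, 0 < W q) ∧ EqOn W w (Icc a b ×ˢ Icc c d) := by
  have hm : ∀ q : ℝ × ℝ, (max a (min b q.1), max c (min d q.2)) ∈ Icc a b ×ˢ Icc c d := fun q =>
    ⟨⟨le_max_left _ _, max_le hab (min_le_left _ _)⟩,
      ⟨le_max_left _ _, max_le hcd (min_le_left _ _)⟩⟩
  refine ⟨fun q => w (max a (min b q.1), max c (min d q.2)), ?_, fun q => hpos _ (hm q), ?_⟩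
  · exact hw.comp_continuous (by fun_prop) hm
  · rintro ⟨x, y⟩ ⟨hx, hy⟩
    simp only at hx hy
    simp [min_eq_right hx.2, min_eq_right hy.2, max_eq_right hx.1, max_eq_right hy.1]

/-! ### Areas of rectangles -/

/-- The circle measure can be computed on any fundamental domain. -/
lemma circleMeasure_eq (a : ℝ) :
    circleMeasure = Measure.map para (volume.restrict (Ioc a (a + 1))) := by
  have key : ∀ t : ℝ, Measure.map para (volume.restrict (Ioc t (t + 1)))
      = Measure.map circleHomeo (volume : Measure (AddCircle (1 : ℝ))) := by
    intro t
    rw [← (AddCircle.measurePreserving_mk 1 t).map_eq,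
      Measure.map_map circleHomeo.continuous.measurable
        (AddCircle.measurePreserving_mk 1 t).measurable]
    rfl
  have h0 := key 0
  rw [zero_add] at h0
  rw [key a, ← h0, circleMeasure]
  congr 1
  exact Measure.restrict_congr_set Ico_ae_eq_Ioc

lemma para_injOn (a : ℝ) : InjOn para (Ioc a (a + 1)) := fun _ hx _ hy h =>
  (AddCircle.coe_eq_coe_iff_of_mem_Ioc hx hy).1 (para_eq_iff.1 h)

lemma measurableSet_arc (a b : ℝ) : MeasurableSet (para '' Ioo a b) :=
  (isOpenMap_para _ isOpen_Ioo).measurableSet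

lemma circleMeasure_restrict_arc {a b : ℝ} (hb : b ≤ a + 1) :
    circleMeasure.restrict (para '' Ioo a b) = Measure.map para (volume.restrict (Ioo a b)) := by
  rw [circleMeasure_eq a, Measure.restrict_map continuous_para.measurable (measurableSet_arc a b),
    Measure.restrict_restrict (continuous_para.measurable (measurableSet_arc a b))]
  congr 2
  ext x
  constructor
  · rintro ⟨⟨y, hy, hyx⟩, hx⟩
    have hy' : y ∈ Ioc a (a + 1) := ⟨hy.1, hy.2.le.trans hb⟩
    rwa [← para_injOn a hy' hx hyx]
  · intro hx
    exact ⟨⟨x, hx, rfl⟩, hx.1, hx.2.le.trans hb⟩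

lemma continuousAt_form {k : ℕ∞} {ω : RP1 → RP1 → ℝ} (hω : IsVolumeForm k ω) {x y : RP1}
    (h : x ≠ y) : ContinuousAt (fun q : RP1 × RP1 => ω q.1 q.2) (x, y) := by
  obtain ⟨s, rfl⟩ := para_surjective x
  obtain ⟨t, rfl⟩ := para_surjective y
  have h1 : ContinuousAt (chartDensity ω) (s, t) :=
    hω.2.continuousOn.continuousAt (isOpen_offDiag2.mem_nhds h)
  have h2 : Filter.map (Prod.map para para) (nhds (s, t)) = nhds (para s, para t) :=
    (isOpenMap_para.prodMap isOpenMap_para).map_nhds_eq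
      (continuous_para.prodMap continuous_para).continuousAt
  rw [ContinuousAt, ← h2, Filter.tendsto_map'_iff]
  exact h1

instance : SFinite circleMeasure := by unfold circleMeasure; infer_instance

/-- The mass of a product of arcs is the iterated integral of the density in the angular
coordinates. The density is represented by any continuous function agreeing with it on the
closed rectangle. -/
lemma area_eq {k : ℕ∞} {ω : RP1 → RP1 → ℝ} (hω : IsVolumeForm k ω) {a b c d : ℝ}
    (hab : a ≤ b) (hb : b ≤ a + 1) (hcd : c ≤ d) (hd : d ≤ c + 1)
    (hbox : Icc a b ×ˢ Icc c d ⊆ offDiag2) {W : ℝ × ℝ → ℝ} (hW : Continuous W)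
    (hWpos : ∀ q, 0 < W q) (hWω : EqOn W (chartDensity ω) (Icc a b ×ˢ Icc c d)) :
    volumeFormMeasure ω ((para '' Ioo a b) ×ˢ (para '' Ioo c d))
      = ENNReal.ofReal (∫ u in a..b, ∫ v in c..d, W (u, v)) := by
  -- `ω` need not be measurable on the diagonal, hence the a.e.-measurable change of variables
  -- on the rectangle, where `ω` is continuous.
  have hms : MeasurableSet ((para '' Ioo a b) ×ˢ (para '' Ioo c d)) :=
    (measurableSet_arc a b).prod (measurableSet_arc c d)
  have hmp : Measurable (Prod.map para para) :=
    (continuous_para.prodMap continuous_para).measurable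
  have hmeas : Measure.map (Prod.map para para)
      ((volume.restrict (Ioo a b)).prod (volume.restrict (Ioo c d)))
      = (circleMeasure.prod circleMeasure).restrict ((para '' Ioo a b) ×ˢ (para '' Ioo c d)) := by
    rw [← Measure.prod_restrict, circleMeasure_restrict_arc hb, circleMeasure_restrict_arc hd,
      Measure.map_prod_map _ _ continuous_para.measurable continuous_para.measurable]
  have hωc : ContinuousOn (fun q : RP1 × RP1 => ω q.1 q.2)
      ((para '' Ioo a b) ×ˢ (para '' Ioo c d)) := by
    rintro ⟨_, _⟩ ⟨⟨s, hs, rfl⟩, ⟨t, ht, rfl⟩⟩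
    have hst : (s, t) ∈ offDiag2 := hbox ⟨Ioo_subset_Icc_self hs, Ioo_subset_Icc_self ht⟩
    have hne : para s ≠ para t := hst
    exact (continuousAt_form hω hne).continuousWithinAt
  have hae : AEMeasurable (fun q : RP1 × RP1 => ENNReal.ofReal (ω q.1 q.2))
      ((circleMeasure.prod circleMeasure).restrict
        ((para '' Ioo a b) ×ˢ (para '' Ioo c d))) :=
    (hωc.aemeasurable hms).ennreal_ofReal
  rw [volumeFormMeasure, withDensity_apply _ hms, ← hmeas, lintegral_map' (hmeas ▸ hae)
    hmp.aemeasurable, Measure.prod_restrict]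
  have hms' : MeasurableSet (Ioo a b ×ˢ Ioo c d) := measurableSet_Ioo.prod measurableSet_Ioo
  have hsub : Ioo a b ×ˢ Ioo c d ⊆ Icc a b ×ˢ Icc c d :=
    prod_mono Ioo_subset_Icc_self Ioo_subset_Icc_self
  rw [setLIntegral_congr_fun (g := fun q => ENNReal.ofReal (W q)) hms'
    (fun q hq => by
      show ENNReal.ofReal (chartDensity ω q) = ENNReal.ofReal (W q)
      rw [hWω (hsub hq)])]
  have hint : IntegrableOn W (Ioo a b ×ˢ Ioo c d) (volume.prod volume) :=
    (hW.continuousOn.integrableOn_compact (isCompact_Icc.prod isCompact_Icc)).mono_set hsub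
  rw [← ofReal_integral_eq_lintegral_ofReal hint (Filter.Eventually.of_forall fun q => (hWpos q).le),
    setIntegral_prod _ hint, intervalIntegral.integral_of_le hab, integral_Ioc_eq_integral_Ioo]
  congr 2
  ext u
  rw [intervalIntegral.integral_of_le hcd, integral_Ioc_eq_integral_Ioo]

lemma image_Ioo_of_strictMono {F : ℝ → ℝ} (hF : Continuous F) (h : StrictMono F) {a b : ℝ}
    (hab : a ≤ b) : F '' Ioo a b = Ioo (F a) (F b) := by
  refine Subset.antisymm ?_ (intermediate_value_Ioo hab hF.continuousOn)
  rintro _ ⟨x, hx, rfl⟩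
  exact ⟨h hx.1, h hx.2⟩

lemma image_Ioo_of_strictAnti {F : ℝ → ℝ} (hF : Continuous F) (h : StrictAnti F) {a b : ℝ}
    (hab : a ≤ b) : F '' Ioo a b = Ioo (F b) (F a) := by
  refine Subset.antisymm ?_ (intermediate_value_Ioo' hab hF.continuousOn)
  rintro _ ⟨x, hx, rfl⟩
  exact ⟨h hx.2, h hx.1⟩

lemma image_arc {f : RP1 → RP1} {F : ℝ → ℝ} (hF : IsLift F f) (s : Set ℝ) :
    f '' (para '' s) = para '' (F '' s) := by
  rw [image_image, image_image]
  exact image_congr fun t _ => hF t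

lemma mass_image {ω : RP1 → RP1 → ℝ} {f : RP1 ≃ₜ RP1}
    (hpres : MeasurePreserving (fun q : RP1 × RP1 => (f q.1, f q.2))
      (volumeFormMeasure ω) (volumeFormMeasure ω)) {I J : Set RP1}
    (hI : IsOpen I) (hJ : IsOpen J) :
    volumeFormMeasure ω ((f '' I) ×ˢ (f '' J)) = volumeFormMeasure ω (I ×ˢ J) := by
  rw [← hpres.measure_preimage (((f.isOpenMap _ hI).measurableSet.prod
    (f.isOpenMap _ hJ).measurableSet).nullMeasurableSet)]
  congr 1
  ext ⟨x, y⟩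
  simp [f.injective.mem_set_image]

lemma integral_box_nonneg {W : ℝ × ℝ → ℝ} (hWpos : ∀ q, 0 < W q) {a b c d : ℝ}
    (hab : a ≤ b) (hcd : c ≤ d) : 0 ≤ ∫ u in a..b, ∫ v in c..d, W (u, v) :=
  intervalIntegral.integral_nonneg hab fun _ _ =>
    intervalIntegral.integral_nonneg hcd fun _ _ => (hWpos _).le

/-- Around each pair of distinct points, invariance of the measure becomes an equality of
oriented areas. If `F` reverses the orientation, the two sign changes cancel. -/
lemma exists_area_identity {k : ℕ∞} {ω : RP1 → RP1 → ℝ} (hω : IsVolumeForm k ω)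
    {f : RP1 ≃ₜ RP1}
    (hpres : MeasurePreserving (fun q : RP1 × RP1 => (f q.1, f q.2))
      (volumeFormMeasure ω) (volumeFormMeasure ω))
    {F : ℝ → ℝ} (hF : Continuous F) (hFi : Injective F) (hl : IsLift F f)
    (hdeg : (∀ t : ℝ, F (t + 1) = F t + 1) ∨ (∀ t : ℝ, F (t + 1) = F t - 1))
    {x y : ℝ} (hxy : (x, y) ∈ offDiag2) :
    ∃ (W V : ℝ × ℝ → ℝ) (a b c d : ℝ), Continuous W ∧ Continuous V ∧ (∀ q, 0 < V q) ∧
      x ∈ Ioo a b ∧ y ∈ Ioo c d ∧ W (x, y) = chartDensity ω (x, y) ∧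
      V (F x, F y) = chartDensity ω (F x, F y) ∧
      ∀ s ∈ Icc a b, ∀ t ∈ Icc c d,
        ∫ u in a..s, ∫ v in c..t, W (u, v) = ∫ u in F a..F s, ∫ v in F c..F t, V (u, v) := by
  obtain ⟨ε, hε, hball⟩ := Metric.isOpen_iff.1 isOpen_offDiag2 _ hxy
  set δ := min (ε / 2) (1 / 4) with hδ
  have hδ0 : 0 < δ := by positivity
  have hδε : δ < ε := (min_le_left _ _).trans_lt (by linarith)
  have hδ4 : δ ≤ 1 / 4 := min_le_right _ _
  have hbox : Icc (x - δ) (x + δ) ×ˢ Icc (y - δ) (y + δ) ⊆ offDiag2 := by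
    rintro ⟨s, t⟩ ⟨hs, ht⟩
    apply hball
    rw [Metric.mem_ball, Prod.dist_eq, Real.dist_eq, Real.dist_eq]
    refine max_lt ?_ ?_
    · rw [abs_lt]; constructor <;> linarith [hs.1, hs.2]
    · rw [abs_lt]; constructor <;> linarith [ht.1, ht.2]
  generalize ha : x - δ = a at hbox
  generalize hb : x + δ = b at hbox
  generalize hc : y - δ = c at hbox
  generalize hd : y + δ = d at hbox
  have hpos : ∀ q ∈ offDiag2, 0 < chartDensity ω q := fun q hq => hω.1 _ _ hq
  have hab : a ≤ b := by linarith
  have hcd : c ≤ d := by linarith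
  have hx : x ∈ Ioo a b := ⟨by linarith, by linarith⟩
  have hy : y ∈ Ioo c d := ⟨by linarith, by linarith⟩
  obtain ⟨W, hWc, hWpos, hWω⟩ := exists_clamp hab hcd (hω.2.continuousOn.mono hbox)
    (fun q hq => hpos q (hbox hq))
  have himg : ∀ s ∈ Icc a b, ∀ t ∈ Icc c d, (F s, F t) ∈ offDiag2 := by
    intro s hs t ht h
    simp only [← hl s, ← hl t] at h
    exact hbox (mk_mem_prod hs ht) (f.injective h)
  rcases hF.strictMono_of_inj hFi with hm | hm
  · have hdeg : ∀ t : ℝ, F (t + 1) = F t + 1 := hdeg.resolve_right fun h => by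
      have := hm (lt_add_one (0 : ℝ))
      rw [h] at this
      linarith
    have hbox' : Icc (F a) (F b) ×ˢ Icc (F c) (F d) ⊆ offDiag2 := by
      rintro ⟨_, _⟩ ⟨h1, h2⟩
      obtain ⟨s, hs, rfl⟩ := intermediate_value_Icc hab hF.continuousOn h1
      obtain ⟨t, ht, rfl⟩ := intermediate_value_Icc hcd hF.continuousOn h2
      exact himg s hs t ht
    obtain ⟨V, hVc, hVpos, hVω⟩ := exists_clamp (hm.monotone hab) (hm.monotone hcd)
      (hω.2.continuousOn.mono hbox') (fun q hq => hpos q (hbox' hq))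
    refine ⟨W, V, a, b, c, d, hWc, hVc, hVpos, hx, hy,
      hWω ⟨Ioo_subset_Icc_self hx, Ioo_subset_Icc_self hy⟩,
      hVω ⟨⟨(hm hx.1).le, (hm hx.2).le⟩, ⟨(hm hy.1).le, (hm hy.2).le⟩⟩, fun s hs t ht => ?_⟩
    have h1 := mass_image hpres (isOpenMap_para _ (isOpen_Ioo (a := a) (b := s)))
      (isOpenMap_para _ (isOpen_Ioo (a := c) (b := t)))
    have sub : Icc a s ×ˢ Icc c t ⊆ Icc a b ×ˢ Icc c d :=
      prod_mono (Icc_subset_Icc_right hs.2) (Icc_subset_Icc_right ht.2)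
    have sub' : Icc (F a) (F s) ×ˢ Icc (F c) (F t) ⊆ Icc (F a) (F b) ×ˢ Icc (F c) (F d) :=
      prod_mono (Icc_subset_Icc_right (hm.monotone hs.2))
        (Icc_subset_Icc_right (hm.monotone ht.2))
    rw [image_arc hl, image_arc hl, image_Ioo_of_strictMono hF hm hs.1,
      image_Ioo_of_strictMono hF hm ht.1,
      area_eq hω hs.1 (by linarith [hs.2]) ht.1 (by linarith [ht.2]) (sub.trans hbox) hWc hWpos
        (hWω.mono sub),
      area_eq hω (hm.monotone hs.1) (by rw [← hdeg]; exact hm.monotone (by linarith [hs.2]))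
        (hm.monotone ht.1) (by rw [← hdeg]; exact hm.monotone (by linarith [ht.2]))
        (sub'.trans hbox') hVc hVpos (hVω.mono sub'),
      ENNReal.ofReal_eq_ofReal_iff (integral_box_nonneg hVpos (hm.monotone hs.1) (hm.monotone ht.1))
        (integral_box_nonneg hWpos hs.1 ht.1)] at h1
    exact h1.symm
  · have hdeg : ∀ t : ℝ, F (t + 1) = F t - 1 := hdeg.resolve_left fun h => by
      have := hm (lt_add_one (0 : ℝ))
      rw [h] at this
      linarith
    have hbox' : Icc (F b) (F a) ×ˢ Icc (F d) (F c) ⊆ offDiag2 := by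
      rintro ⟨_, _⟩ ⟨h1, h2⟩
      obtain ⟨s, hs, rfl⟩ := intermediate_value_Icc' hab hF.continuousOn h1
      obtain ⟨t, ht, rfl⟩ := intermediate_value_Icc' hcd hF.continuousOn h2
      exact himg s hs t ht
    obtain ⟨V, hVc, hVpos, hVω⟩ := exists_clamp (hm.antitone hab) (hm.antitone hcd)
      (hω.2.continuousOn.mono hbox') (fun q hq => hpos q (hbox' hq))
    refine ⟨W, V, a, b, c, d, hWc, hVc, hVpos, hx, hy,
      hWω ⟨Ioo_subset_Icc_self hx, Ioo_subset_Icc_self hy⟩,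
      hVω ⟨⟨(hm hx.2).le, (hm hx.1).le⟩, ⟨(hm hy.2).le, (hm hy.1).le⟩⟩, fun s hs t ht => ?_⟩
    have h1 := mass_image hpres (isOpenMap_para _ (isOpen_Ioo (a := a) (b := s)))
      (isOpenMap_para _ (isOpen_Ioo (a := c) (b := t)))
    have sub : Icc a s ×ˢ Icc c t ⊆ Icc a b ×ˢ Icc c d :=
      prod_mono (Icc_subset_Icc_right hs.2) (Icc_subset_Icc_right ht.2)
    have sub' : Icc (F s) (F a) ×ˢ Icc (F t) (F c) ⊆ Icc (F b) (F a) ×ˢ Icc (F d) (F c) :=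
      prod_mono (Icc_subset_Icc_left (hm.antitone hs.2))
        (Icc_subset_Icc_left (hm.antitone ht.2))
    have hlen : ∀ p q : ℝ, q ≤ p + 1 → F p ≤ F q + 1 := fun p q h => by
      have := hm.antitone h
      rw [hdeg] at this
      linarith
    rw [image_arc hl, image_arc hl, image_Ioo_of_strictAnti hF hm hs.1,
      image_Ioo_of_strictAnti hF hm ht.1,
      area_eq hω hs.1 (by linarith [hs.2]) ht.1 (by linarith [ht.2]) (sub.trans hbox) hWc hWpos
        (hWω.mono sub),
      area_eq hω (hm.antitone hs.1) (hlen _ _ (by linarith [hs.2]))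
        (hm.antitone ht.1) (hlen _ _ (by linarith [ht.2]))
        (sub'.trans hbox') hVc hVpos (hVω.mono sub'),
      ENNReal.ofReal_eq_ofReal_iff (integral_box_nonneg hVpos (hm.antitone hs.1) (hm.antitone ht.1))
        (integral_box_nonneg hWpos hs.1 ht.1)] at h1
    rw [← h1, intervalIntegral.integral_symm (F s) (F a), ← intervalIntegral.integral_neg]
    congr 1
    ext u
    rw [intervalIntegral.integral_symm (F t) (F c), neg_neg]

/-! ### Regularity -/

lemma add_half_mem_offDiag2 (x : ℝ) : (x, x + 1 / 2) ∈ offDiag2 := by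
  intro h
  obtain ⟨n, hn⟩ := para_eq_iff_int.1 h
  simp only at hn
  have h1 : (2 * n : ℝ) = -1 := by linarith
  have h2 : 2 * n = -1 := by exact_mod_cast h1
  omega

/-- A lift satisfying the density equation is as regular as the equation allows: with `y` fixed,
`F' x = w (x, y) / (w (F x, F y) F' y)`, and the right side is as smooth as `F`, up to `C^k`. -/
lemma contDiff_of_density {k : ℕ∞} {ω : RP1 → RP1 → ℝ} (hω : IsVolumeForm k ω) {f : RP1 ≃ₜ RP1}
    {F : ℝ → ℝ} (hl : IsLift F f) (hd : Differentiable ℝ F) (hF' : ∀ t, deriv F t ≠ 0)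
    (h : ∀ x y, (x, y) ∈ offDiag2 →
      chartDensity ω (x, y) = chartDensity ω (F x, F y) * deriv F x * deriv F y) :
    ContDiff ℝ (k + 1 : ℕ∞) F := by
  have himg : ∀ s t, (s, t) ∈ offDiag2 → (F s, F t) ∈ offDiag2 := by
    intro s t hst h'
    simp only [← hl s, ← hl t] at h'
    exact hst (f.injective h')
  have step : ∀ n : ℕ, (n : ℕ∞) ≤ k → ContDiff ℝ n F → ContDiff ℝ (n + 1) F := by
    intro n hn hFn
    rw [contDiff_succ_iff_deriv]
    refine ⟨hd, by simp, contDiff_iff_contDiffAt.2 fun x => ?_⟩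
    have hxy := add_half_mem_offDiag2 x
    generalize x + 1 / 2 = y at hxy
    have hcd : ∀ q ∈ offDiag2, ContDiffAt ℝ n (chartDensity ω) q := fun q hq =>
      (hω.2.contDiffAt (isOpen_offDiag2.mem_nhds hq)).of_le (by exact_mod_cast hn)
    have hev : deriv F =ᶠ[nhds x] fun s =>
        chartDensity ω (s, y) / (chartDensity ω (F s, F y) * deriv F y) := by
      have hopen : {s | (s, y) ∈ offDiag2} ∈ nhds x :=
        (isOpen_offDiag2.preimage (by fun_prop : Continuous fun s : ℝ => (s, y))).mem_nhds hxy
      filter_upwards [hopen] with s hs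
      have h1 : chartDensity ω (F s, F y) ≠ 0 := (hω.1 _ _ (himg s y hs)).ne'
      rw [h s y hs, eq_div_iff (mul_ne_zero h1 (hF' y))]
      ring
    refine ContDiffAt.congr_of_eventuallyEq ?_ hev
    refine ContDiffAt.div ?_ (ContDiffAt.mul ?_ contDiffAt_const)
      (mul_ne_zero (hω.1 _ _ (himg x y hxy)).ne' (hF' y))
    · exact ContDiffAt.comp (g := chartDensity ω) (f := fun s : ℝ => (s, y)) x (hcd _ hxy)
        (contDiffAt_id.prodMk contDiffAt_const)
    · exact ContDiffAt.comp (g := chartDensity ω) (f := fun s : ℝ => (F s, F y)) x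
        (hcd _ (himg x y hxy)) (hFn.contDiffAt.prodMk contDiffAt_const)
  have all : ∀ n : ℕ, (n : ℕ∞) ≤ k → ContDiff ℝ (n + 1) F := by
    intro n
    induction n with
    | zero => exact fun hn => step 0 hn (contDiff_zero.2 hd.continuous)
    | succ n ih =>
      intro hn
      refine step (n + 1) hn ?_
      exact_mod_cast ih (le_trans (by exact_mod_cast n.le_succ) hn)
  induction k using ENat.recTopCoe with
  | top =>
    exact contDiff_infty.2 fun n => (all n le_top).of_le (by exact_mod_cast n.le_succ)
  | coe n => exact_mod_cast all n le_rfl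

lemma circleDeriv_eq {f : RP1 → RP1} {F : ℝ → ℝ} (hl : IsLift F f) (hd : Differentiable ℝ F)
    (x : RP1) : circleDeriv f x = deriv F (Function.invFun para x) := by
  have h : ∃ F : ℝ → ℝ, IsLift F f ∧ Differentiable ℝ F := ⟨F, hl, hd⟩
  rw [circleDeriv, dif_pos h]
  obtain ⟨h1, h2⟩ := h.choose_spec
  obtain ⟨n, hn⟩ := lift_sub_const hd.continuous h2.continuous
    (fun t => by rw [← hl, ← h1])
  rw [funext hn]
  simp

/-- If a circle homeomorphism `f` is such that the diagonal map `(x,y) ↦ (f x, f y)`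
preserves the measure with density a `C^k` volume form `ω` on the cylinder, then `f` is a
`C^(k+1)` diffeomorphism and `ω (f x) (f y) · f'(x) · f'(y) = ω x y` off the diagonal. -/
theorem stmt_1 (k : ℕ∞) (ω : RP1 → RP1 → ℝ) (hω : IsVolumeForm k ω)
    (f : RP1 ≃ₜ RP1)
    (hpres : MeasurePreserving (fun q : RP1 × RP1 => (f q.1, f q.2))
      (volumeFormMeasure ω) (volumeFormMeasure ω)) :
    IsCircleDiffeo (k + 1) f ∧ PreservesForm f ω := by
  obtain ⟨F, hF, hFi, hl, hdeg⟩ := exists_homeo_lift f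
  have hd : Differentiable ℝ F := by
    intro x
    obtain ⟨W, V, a, b, c, d, hW, hV, hVpos, hx, hy, -, -, harea⟩ :=
      exists_area_identity hω hpres hF hFi hl hdeg (add_half_mem_offDiag2 x)
    exact (hasDerivAt_of_area hW hV hVpos hF hFi hx hy harea).differentiableAt
  have hdens : ∀ x y, (x, y) ∈ offDiag2 →
      chartDensity ω (x, y) = chartDensity ω (F x, F y) * deriv F x * deriv F y := by
    intro x y hxy
    obtain ⟨W, V, a, b, c, d, hW, hV, hVpos, hx, hy, hWxy, hVxy, harea⟩ :=
      exists_area_identity hω hpres hF hFi hl hdeg hxy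
    rw [← hWxy, ← hVxy]
    exact density_eq_of_area hW hV hVpos hF hFi hx hy harea (hd y)
  have hF' : ∀ t, deriv F t ≠ 0 := by
    intro t h0
    have h1 := hdens t _ (add_half_mem_offDiag2 t)
    rw [h0, mul_zero, zero_mul] at h1
    exact (hω.1 _ _ (add_half_mem_offDiag2 t)).ne' h1
  refine ⟨⟨F, hl, contDiff_of_density hω hl hd hF' hdens, hF', hdeg⟩, fun x y hxy => ?_⟩
  have hx : para (Function.invFun para x) = x := Function.invFun_eq (para_surjective x)
  have hy : para (Function.invFun para y) = y := Function.invFun_eq (para_surjective y)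
  rw [circleDeriv_eq hl hd, circleDeriv_eq hl hd]
  have h1 := hdens (Function.invFun para x) (Function.invFun para y)
    (show para _ ≠ para _ by rwa [hx, hy])
  simp only [chartDensity] at h1
  rw [← hl, ← hl, hx, hy] at h1
  exact h1.symm

end
end

section
/- Let f be a C¹ diffeomorphism of S¹ with exactly two fixed points N and S. If f preserves a continuous volume form on the cylinder C, then f'(N)·f'(S) = 1 and f'(N) ≠ 1. -/
/-!
Evaluating the invariance relation at the pair of fixed points `(N, S)` gives
`ω(N,S) f'(N) f'(S) = ω(N,S)`, and `ω(N,S) > 0`, so `f'(N) f'(S) = 1`.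

Suppose `f'(N) = 1`. The invariance relation at `(x, N)` reads `ω(f x, N) f'(x) = ω(x, N)`, so
`f` preserves the measure with positive continuous density `ω(·, N)` on `S¹ \ {N}`
(`circleDeriv_ne_one`). In an increasing lift fixing lifts `n < s < n + 1` of `N` and `S`
(`exists_normalised_lift`), a point `x` of `(n, s)` has `[x, s]` mapped onto `[F x, s]`. These
intervals have finite and equal mass, so the interval between `x` and `F x` has mass zero and
`F x = x`. This is a third fixed point, a contradiction.
-/

noncomputable section

open Real Set Function MeasureTheory
open scoped Classical

lemma para_eq_iff_s5 (a b : ℝ) : para a = para b ↔ ∃ k : ℤ, a = b + k := by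
  unfold para
  rw [Projectivization.mk_eq_mk_iff']
  constructor
  · rintro ⟨c, hc⟩
    have h0 : c * Real.cos (π * b) = Real.cos (π * a) := by simpa using congrFun hc 0
    have h1 : c * Real.sin (π * b) = Real.sin (π * a) := by simpa using congrFun hc 1
    have h2 : Real.sin (π * a - π * b) = 0 := by
      rw [Real.sin_sub, ← h0, ← h1]; ring
    obtain ⟨k, hk⟩ := Real.sin_eq_zero_iff.1 h2
    refine ⟨k, ?_⟩
    have h3 : π * (a - b - k) = 0 := by linarith
    have h4 := (mul_eq_zero.1 h3).resolve_left Real.pi_ne_zero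
    linarith
  · rintro ⟨k, rfl⟩
    refine ⟨(-1) ^ k, ?_⟩
    have e : π * (b + k) = π * b + k * π := by ring
    rw [e, Real.cos_add_int_mul_pi, Real.sin_add_int_mul_pi]
    simp

lemma para_surjective_s5 : Function.Surjective para := by
  intro x
  induction x using Projectivization.ind with
  | h v hv =>
    set z : ℂ := ⟨v 0, v 1⟩ with hz
    refine ⟨z.arg / π, ?_⟩
    unfold para
    rw [Projectivization.mk_eq_mk_iff']
    have hz0 : z ≠ 0 := by
      intro h
      apply hv
      have h0 : v 0 = 0 := by simpa [hz] using congrArg Complex.re h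
      have h1 : v 1 = 0 := by simpa [hz] using congrArg Complex.im h
      ext i; fin_cases i <;> simp [h0, h1]
    have hn : ‖z‖ ≠ 0 := norm_ne_zero_iff.2 hz0
    refine ⟨‖z‖⁻¹, ?_⟩
    have e : π * (z.arg / π) = z.arg := by field_simp
    rw [e, Complex.cos_arg hz0, Complex.sin_arg]
    ext i; fin_cases i <;> simp [hz] <;> ring

/-- A continuous function with integer values is constant, so two continuous lifts of the same
map to the circle differ by a constant. -/
lemma lifts_differ_by_const {A B : ℝ → ℝ} (hA : Continuous A) (hB : Continuous B)
    (h : ∀ t, para (A t) = para (B t)) : ∃ c : ℝ, ∀ t, A t = B t + c := by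
  choose k hk using fun t => (para_eq_iff_s5 _ _).1 (h t)
  have hcont : Continuous fun t => ((k t : ℤ) : ℝ) := by
    have e : (fun t => ((k t : ℤ) : ℝ)) = fun t => A t - B t := by
      funext t; rw [hk t]; ring
    rw [e]; exact hA.sub hB
  have hk' : Continuous k := Int.isClosedEmbedding_coe_real.isEmbedding.continuous_iff.2 hcont
  refine ⟨k 0, fun t => ?_⟩
  rw [hk t, PreconnectedSpace.constant inferInstance hk' (x := t) (y := 0)]

/-- `circleDeriv` may be computed with any differentiable lift and at any parameter. -/
lemma circleDeriv_para {f : RP1 → RP1} {F : ℝ → ℝ} (hF : IsLift F f)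
    (hd : Differentiable ℝ F) (t : ℝ) : circleDeriv f (para t) = deriv F t := by
  have h : ∃ F : ℝ → ℝ, IsLift F f ∧ Differentiable ℝ F := ⟨F, hF, hd⟩
  unfold circleDeriv
  rw [dif_pos h]
  obtain ⟨hG, hGd⟩ := h.choose_spec
  set G := h.choose
  have ht0 : para (Function.invFun para (para t)) = para t :=
    Function.invFun_eq ⟨t, rfl⟩
  obtain ⟨m, hm⟩ := (para_eq_iff_s5 _ _).1 ht0
  rw [hm]
  obtain ⟨c, hc⟩ := lifts_differ_by_const (A := fun u => G (u + m)) (B := F)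
    (hGd.continuous.comp (by fun_prop)) hd.continuous (fun u => by
      rw [← hG, ← hF]
      exact congrArg f ((para_eq_iff_s5 _ _).2 ⟨m, rfl⟩))
  rw [← deriv_comp_add_const, funext hc, deriv_add_const]

/-- A normalised lift of an orientation-preserving diffeomorphism with two fixed points: the
fixed points `N`, `S` are lifted to fixed points `n < s < n + 1` of an increasing lift. -/
lemma exists_normalised_lift {f : RP1 → RP1} (hf : IsCircleDiffeo 1 f) {N S : RP1}
    (hNS : N ≠ S) (hN : f N = N) (hS : f S = S) (hpos : 0 < circleDeriv f N) :
    ∃ (F : ℝ → ℝ) (n s : ℝ), IsLift F f ∧ ContDiff ℝ 1 F ∧ StrictMono F ∧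
      para n = N ∧ para s = S ∧ n < s ∧ s < n + 1 ∧ F n = n ∧ F s = s ∧ F (n + 1) = n + 1 := by
  obtain ⟨F₀, hF₀, hC₀, hne₀, hdeg₀⟩ := hf
  obtain ⟨n, rfl⟩ := para_surjective_s5 N
  obtain ⟨s₀, rfl⟩ := para_surjective_s5 S
  set s : ℝ := n + Int.fract (s₀ - n) with hs
  have hs0 : para s = para s₀ := by
    refine (para_eq_iff_s5 _ _).2 ⟨-⌊s₀ - n⌋, ?_⟩
    have := Int.fract_add_floor (s₀ - n)
    push_cast; linarith
  rw [← hs0] at hNS hS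
  obtain ⟨k, hk⟩ := (para_eq_iff_s5 _ _).1 ((hF₀ n).symm.trans hN)
  have hd₀ : Differentiable ℝ F₀ := hC₀.differentiable (by simp)
  have hc₀ : Continuous (deriv F₀) := hC₀.continuous_deriv (by simp)
  rw [circleDeriv_para hF₀ hd₀] at hpos
  -- A nowhere vanishing continuous derivative has constant sign.
  have hall : ∀ t, 0 < deriv F₀ t := by
    intro t
    by_contra hneg
    obtain ⟨u, hu⟩ := mem_range_of_exists_le_of_exists_ge hc₀
      ⟨t, not_lt.1 hneg⟩ ⟨n, hpos.le⟩
    exact hne₀ u hu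
  have hmono₀ : StrictMono F₀ := strictMono_of_deriv_pos hall
  have hdeg : F₀ (n + 1) = F₀ n + 1 := by
    rcases hdeg₀ with h | h
    · exact h n
    · have h1 := h n
      have h2 := hmono₀ (show n < n + 1 by linarith)
      linarith
  have hns : n < s := by
    have h1 := Int.fract_nonneg (s₀ - n)
    rcases h1.lt_or_eq with h2 | h2
    · linarith
    · exact absurd (by rw [hs, ← h2, add_zero]) hNS
  have hsn : s < n + 1 := by
    have h1 := Int.fract_lt_one (s₀ - n)
    linarith
  obtain ⟨j, hj⟩ := (para_eq_iff_s5 _ _).1 ((hF₀ s).symm.trans hS)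
  have h1 := hmono₀ hns
  have h2 := hmono₀ hsn
  have hjk : j = k := by
    have h3 : (j : ℝ) < (k + 1 : ℤ) := by push_cast; linarith
    have h4 : (k : ℝ) < (j + 1 : ℤ) := by push_cast; linarith
    have h5 : j < k + 1 := by exact_mod_cast h3
    have h6 : k < j + 1 := by exact_mod_cast h4
    omega
  refine ⟨fun t => F₀ t - k, n, s, fun t => ?_, hC₀.sub contDiff_const,
    fun a b hab => by simpa using hmono₀ hab, rfl, hs0, hns, hsn, ?_, ?_, ?_⟩
  · rw [hF₀ t]
    exact (para_eq_iff_s5 _ _).2 ⟨k, by ring⟩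
  · simp only [hk]; ring
  · simp only [hj, hjk]; ring
  · simp only [hdeg, hk]; ring

/-- If `f'(N) = 1` then `f` preserves the one-dimensional density `ω(·, N)` on `S¹ \ {N}`;
comparing the masses of `[x, S]` and `[f x, S]` for `x` in the open arc from `N` to `S` shows that
`x` is a third fixed point. -/
lemma circleDeriv_ne_one {f : RP1 → RP1} (hf : IsCircleDiffeo 1 f) {N S : RP1} (hNS : N ≠ S)
    (hfix : {x : RP1 | f x = x} = {N, S})
    {ω : RP1 → RP1 → ℝ} (hω : IsVolumeForm 0 ω) (hpres : PreservesForm f ω) :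
    circleDeriv f N ≠ 1 := by
  intro hone
  have hN : f N = N := by
    have : N ∈ {x : RP1 | f x = x} := by rw [hfix]; simp
    exact this
  have hS : f S = S := by
    have : S ∈ {x : RP1 | f x = x} := by rw [hfix]; simp
    exact this
  obtain ⟨F, n, s, hF, hC, hmono, rfl, rfl, hns, hsn, hFn, hFs, hFn1⟩ :=
    exists_normalised_lift hf hNS hN hS (by rw [hone]; norm_num)
  have hd : Differentiable ℝ F := hC.differentiable (by simp)
  have hdc : Continuous (deriv F) := hC.continuous_deriv (by simp)
  have hdist : ∀ a b : ℝ, a < b → b < a + 1 → para b ≠ para a := by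
    intro a b h1 h2 h
    obtain ⟨k, hk⟩ := (para_eq_iff_s5 _ _).1 h
    have h3 : (0 : ℝ) < k := by linarith
    have h4 : (k : ℝ) < 1 := by linarith
    have h5 : (0 : ℤ) < k := by exact_mod_cast h3
    have h6 : k < (1 : ℤ) := by exact_mod_cast h4
    omega
  set g : ℝ → ℝ := fun t => ω (para t) (para n) with hg
  have hgpos : ∀ t ∈ Ioo n (n + 1), 0 < g t := fun t ht => hω.1 _ _ (hdist n t ht.1 ht.2)
  have hgcont : ContinuousOn g (Ioo n (n + 1)) := by
    have h1 : ContinuousOn (chartDensity ω) offDiag2 := hω.2.continuousOn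
    exact h1.comp (f := fun t : ℝ => (t, n)) (by fun_prop) fun t ht => hdist n t ht.1 ht.2
  have hinv : ∀ t ∈ Ioo n (n + 1), g (F t) * deriv F t = g t := by
    intro t ht
    have h := hpres _ _ (hdist n t ht.1 ht.2)
    rw [hone, hN, mul_one, circleDeriv_para hF hd, hF t] at h
    exact h
  obtain ⟨x, hnx, hxs⟩ := exists_between hns
  have hnFx : n < F x := hFn ▸ hmono hnx
  have hFxs : F x < s := by simpa [hFs] using hmono hxs
  have hsub : ∀ a b : ℝ, a ∈ Ioo n (n + 1) → b ∈ Ioo n (n + 1) →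
      uIcc a b ⊆ Ioo n (n + 1) := fun a b ha hb => ordConnected_Ioo.uIcc_subset ha hb
  have hxm : x ∈ Ioo n (n + 1) := ⟨hnx, hxs.trans hsn⟩
  have hFxm : F x ∈ Ioo n (n + 1) := ⟨hnFx, hFxs.trans hsn⟩
  have hsm : s ∈ Ioo n (n + 1) := ⟨hns, hsn⟩
  have hFm : ∀ t ∈ Ioo n (n + 1), F t ∈ Ioo n (n + 1) := fun t ht =>
    ⟨by simpa [hFn] using hmono ht.1, by simpa [hFn1] using hmono ht.2⟩
  have hcv : ∫ t in x..s, (g ∘ F) t * deriv F t = ∫ u in F x..F s, g u :=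
    intervalIntegral.integral_comp_mul_deriv' (fun t _ => (hd t).hasDerivAt)
      hdc.continuousOn (hgcont.mono (by
        rintro _ ⟨t, ht, rfl⟩
        exact hFm t (hsub x s hxm hsm ht)))
  have hleft : ∫ t in x..s, (g ∘ F) t * deriv F t = ∫ t in x..s, g t :=
    intervalIntegral.integral_congr fun t ht => hinv t (hsub x s hxm hsm ht)
  have hint : ∀ a b : ℝ, a ∈ Ioo n (n + 1) → b ∈ Ioo n (n + 1) →
      IntervalIntegrable g volume a b := fun a b ha hb =>
    (hgcont.mono (hsub a b ha hb)).intervalIntegrable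
  have hzero : ∫ t in x..F x, g t = 0 := by
    have h := intervalIntegral.integral_add_adjacent_intervals
      (hint x (F x) hxm hFxm) (hint (F x) s hFxm hsm)
    rw [hleft, hFs] at hcv
    linarith
  have hpos : ∀ a b : ℝ, a ∈ Ioo n (n + 1) → b ∈ Ioo n (n + 1) → a < b →
      0 < ∫ t in a..b, g t := fun a b ha hb hab =>
    intervalIntegral.intervalIntegral_pos_of_pos_on (hint a b ha hb)
      (fun t ht => hgpos t ⟨ha.1.trans ht.1, ht.2.trans hb.2⟩) hab
  have hxF : F x = x := by
    rcases lt_trichotomy x (F x) with h | h | h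
    · exact absurd hzero (hpos _ _ hxm hFxm h).ne'
    · exact h.symm
    · have h1 := hpos _ _ hFxm hxm h
      rw [intervalIntegral.integral_symm, hzero] at h1
      simp at h1
  have hxfix : para x ∈ {y : RP1 | f y = y} := by
    change f (para x) = para x
    rw [hF x, hxF]
  rw [hfix] at hxfix
  rcases hxfix with h | h
  · exact hdist n x hxm.1 hxm.2 h
  · exact hdist x s hxs (by linarith) h.symm

/-- If a `C¹` circle diffeomorphism with exactly two fixed points `N, S` preserves a
continuous volume form on the cylinder, then `f'(N)·f'(S) = 1` and `f'(N) ≠ 1`. -/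
theorem stmt_5 (f : RP1 → RP1) (hf : IsCircleDiffeo 1 f) (N S : RP1) (hNS : N ≠ S)
    (hfix : {x : RP1 | f x = x} = {N, S})
    (ω : RP1 → RP1 → ℝ) (hω : IsVolumeForm 0 ω) (hpres : PreservesForm f ω) :
    circleDeriv f N * circleDeriv f S = 1 ∧ circleDeriv f N ≠ 1 := by
  refine ⟨?_, circleDeriv_ne_one hf hNS hfix hω hpres⟩
  have hN : f N = N := by
    have : N ∈ {x : RP1 | f x = x} := by rw [hfix]; simp
    exact this
  have hS : f S = S := by
    have : S ∈ {x : RP1 | f x = x} := by rw [hfix]; simp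
    exact this
  have h := hpres N S hNS
  rw [hN, hS, mul_assoc] at h
  exact mul_left_cancel₀ (hω.1 N S hNS).ne' (by rw [h, mul_one])

end
end

section
/- Let n ≥ 1 be an odd integer and define f(x) = x·(1 + xⁿ)^{-1/n} (a real-analytic diffeomorphism of ℝP¹ = ℝ ∪ {∞} fixing only 0) and ω(x,y) = |xⁿ − yⁿ|^{-1-1/n}. Then for all real x ≠ y with x, y and f(x), f(y) defined and distinct, ω(f(x),f(y))·f'(x)·f'(y) = ω(x,y); that is, f preserves the volume form ω on the cylinder C. -/
/-! With `D = 1 + xⁿ` and `g` the real `n`-th root of `D` (odd, so `gⁿ = D` for either sign),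
`f = x / g`. Hence `f(x)ⁿ = xⁿ / (1 + xⁿ)`: the power map conjugates `f` to the parabolic
Möbius map `u ↦ u / (1 + u)`, for which
`f(x)ⁿ - f(y)ⁿ = (xⁿ - yⁿ) / ((1 + xⁿ)(1 + yⁿ))` (`pow_root_map`). On the other hand
`g' = xⁿ⁻¹ / gⁿ⁻¹` gives `f' = (gⁿ - xⁿ) / gⁿ⁺¹ = |D| ^ (-1 - 1/n)` (`hasDerivAt_root_map`),
and these factors cancel those coming from `ω`. -/

noncomputable section

open Real Set Function MeasureTheory
open scoped Classical

/-- The power map conjugates `f` to `u ↦ u / (1 + u)`. -/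
lemma pow_root_map (n : ℕ) (hodd : Odd n) (x : ℝ) :
    (x * (Real.sign (1 + x ^ n) * |1 + x ^ n| ^ ((n : ℝ)⁻¹))⁻¹) ^ n = x ^ n / (1 + x ^ n) := by
  have hn : n ≠ 0 := hodd.pos.ne'
  have hroot : (|1 + x ^ n| ^ ((n : ℝ)⁻¹)) ^ n = |1 + x ^ n| :=
    Real.rpow_inv_natCast_pow (abs_nonneg _) hn
  rw [mul_pow, inv_pow, mul_pow, hroot, div_eq_mul_inv]
  rcases lt_trichotomy (1 + x ^ n) 0 with h | h | h
  · rw [Real.sign_of_neg h, abs_of_neg h, hodd.neg_one_pow]; ring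
  · simp [h]
  · rw [Real.sign_of_pos h, abs_of_pos h]; simp

/-- The derivative of `f`. Near a point with `1 + xⁿ ≠ 0` the sign of `1 + xⁿ` is a constant
`s = ±1`, and `f` agrees with `z ↦ z / (s (s (1 + zⁿ)) ^ (1/n))`. -/
lemma hasDerivAt_root_map (n : ℕ) (hodd : Odd n) (x : ℝ) (hx : 1 + x ^ n ≠ 0) :
    HasDerivAt (fun z : ℝ => z * (Real.sign (1 + z ^ n) * |1 + z ^ n| ^ ((n : ℝ)⁻¹))⁻¹)
      (|1 + x ^ n| ^ (-1 - (n : ℝ)⁻¹)) x := by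
  have hn : (n : ℝ) ≠ 0 := Nat.cast_ne_zero.mpr hodd.pos.ne'
  have hcont : Continuous fun z : ℝ => 1 + z ^ n := by fun_prop
  obtain ⟨s, hs, hpos, hev⟩ : ∃ s : ℝ, s * s = 1 ∧ 0 < s * (1 + x ^ n) ∧
      ∀ z : ℝ, 0 < s * (1 + z ^ n) →
        Real.sign (1 + z ^ n) = s ∧ |1 + z ^ n| = s * (1 + z ^ n) := by
    rcases lt_or_gt_of_ne hx with h | h
    · refine ⟨-1, by norm_num, by linarith, fun z hz => ?_⟩
      have hz' : 1 + z ^ n < 0 := by linarith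
      exact ⟨Real.sign_of_neg hz', by rw [abs_of_neg hz']; ring⟩
    · refine ⟨1, by norm_num, by linarith, fun z hz => ?_⟩
      have hz' : 0 < 1 + z ^ n := by linarith
      exact ⟨Real.sign_of_pos hz', by rw [abs_of_pos hz']; ring⟩
  have hs0 : s ≠ 0 := fun h => by simp [h] at hs
  have hev' : ∀ᶠ z in nhds x, 0 < s * (1 + z ^ n) :=
    (continuous_const.mul hcont).continuousAt.eventually (lt_mem_nhds hpos)
  rw [(hev x hpos).2]
  have hinner : HasDerivAt (fun z : ℝ => s * (1 + z ^ n)) (s * (n * x ^ (n - 1))) x :=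
    ((hasDerivAt_pow n x).const_add 1).const_mul s
  have hr : 0 < (s * (1 + x ^ n)) ^ ((n : ℝ)⁻¹) := Real.rpow_pos_of_pos hpos _
  have hmain := (hasDerivAt_id x).mul
    (((hinner.rpow_const (p := (n : ℝ)⁻¹) (Or.inl hpos.ne')).const_mul s).inv
      (mul_ne_zero hs0 hr.ne'))
  refine (hmain.congr_of_eventuallyEq ?_).congr_deriv ?_
  · filter_upwards [hev'] with z hz
    simp [(hev z hz).1, (hev z hz).2]
  · have hxn : x * x ^ (n - 1) = x ^ n := mul_pow_sub_one hodd.pos.ne' x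
    have hD : (s * (1 + x ^ n)) ≠ 0 := hpos.ne'
    simp only [id, Pi.inv_apply]
    rw [Real.rpow_sub hpos, Real.rpow_sub hpos, Real.rpow_neg_one, Real.rpow_one]
    generalize (s * (1 + x ^ n)) ^ ((n : ℝ)⁻¹) = r at hr
    have hsi : s⁻¹ = s := inv_eq_of_mul_eq_one_left hs
    have hr0 := hr.ne'
    field_simp
    rw [← hxn]
    ring_nf

/-- For odd `n ≥ 1`, the analytic parabolic diffeomorphism `f(x) = x·(1+xⁿ)^(-1/n)` of
`ℝP¹` preserves the volume form `ω(x,y) = |xⁿ - yⁿ|^(-1-1/n)`: in the affine chart, for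
all real `x ≠ y` where everything is defined and distinct,
`ω(f x, f y)·f'(x)·f'(y) = ω(x,y)`. -/
theorem stmt_8 (n : ℕ) (hodd : Odd n) (hn : 1 ≤ n)
    (f : ℝ → ℝ)
    (hf : ∀ x : ℝ, f x = x * (Real.sign (1 + x ^ n) * |1 + x ^ n| ^ ((n : ℝ)⁻¹))⁻¹)
    (ω : ℝ → ℝ → ℝ)
    (hω : ∀ x y : ℝ, ω x y = |x ^ n - y ^ n| ^ (-1 - (n : ℝ)⁻¹)) :
    ∀ x y : ℝ, x ≠ y → 1 + x ^ n ≠ 0 → 1 + y ^ n ≠ 0 → f x ≠ f y →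
      ω (f x) (f y) * deriv f x * deriv f y = ω x y := by
  intro x y hxy hx hy hfxy
  have hfun : f = fun z : ℝ => z * (Real.sign (1 + z ^ n) * |1 + z ^ n| ^ ((n : ℝ)⁻¹))⁻¹ :=
    funext hf
  have hdiff : f x ^ n - f y ^ n = (x ^ n - y ^ n) / ((1 + x ^ n) * (1 + y ^ n)) := by
    rw [hf x, hf y, pow_root_map n hodd, pow_root_map n hodd]
    field_simp
    ring
  have hderiv (z : ℝ) (hz : 1 + z ^ n ≠ 0) : deriv f z = |1 + z ^ n| ^ (-1 - (n : ℝ)⁻¹) := by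
    rw [hfun]
    exact (hasDerivAt_root_map n hodd z hz).deriv
  rw [hω, hω, hdiff, hderiv x hx, hderiv y hy, mul_assoc,
    ← Real.mul_rpow (abs_nonneg _) (abs_nonneg _),
    ← Real.mul_rpow (abs_nonneg _) (by positivity), ← abs_mul, ← abs_mul,
    div_mul_cancel₀ _ (mul_ne_zero hx hy)]

end
end
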